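/- Let F > 0 and, for each λ ∈ (0, Λ(A,B,F)), let t⁺_λ < t⁻_λ denote the two critical points of the fiber map φ_λ in (0,∞). Then as λ ↑ Λ(A,B,F) both branches converge to the inflection point: lim_{λ→Λ(A,B,F)⁻} t⁻_λ = T(A,F), lim_{λ→Λ(A,B,F)⁻} t⁺_λ = T(A,F), and lim_{λ→Λ(A,B,F)⁻} φ_λ(t⁻_λ) = lim_{λ→Λ(A,B,F)⁻} φ_λ(t⁺_λ) = φ_{Λ(A,B,F)}(T(A,F)). -/

import Mathlib

/-!
For `t > 0`, dividing the critical point equation of `φ_λ` by `t^(q-1)` turns it into `λ B = h(t)` with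
`h(t) = A t^(p-q) - F t^(γ-q)` (`crit_eq`). The function `h` increases strictly on `[0, T]` and
decreases strictly on `[T, ∞)`, where `T = T(A,F)`, and its maximum is `h(T) = Λ B` (`hfun_Tcrit`).
Hence a critical point that stays below some `c < T` or above some `c > T` forces
`λ B ≤ h(c) < Λ B`, which is impossible for `λ` close to `Λ`. So every selection of critical points
converges to `T` (`tendsto_crit`), and the energies converge because `(λ, t) ↦ φ_λ(t)` is
continuous.
-/

open Real Filter Topology Set

/-- The fiber map `φ_λ(t) = (A/p) t^p − (λB/q) t^q − (F/γ) t^γ`. -/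
noncomputable def phi (p q γ A B F lam : ℝ) : ℝ → ℝ :=
  fun t => A / p * t ^ p - lam * B / q * t ^ q - F / γ * t ^ γ

/-- The extremal value `Λ(A,B,F)`. -/
noncomputable def Lam (p q γ A B F : ℝ) : ℝ :=
  (γ - p) / (γ - q) * ((p - q) / (γ - q)) ^ ((p - q) / (γ - p)) *
    A ^ ((γ - q) / (γ - p)) / (B * F ^ ((p - q) / (γ - p)))

/-- The degenerate critical point `T(A,F)`. -/
noncomputable def Tcrit (p q γ A F : ℝ) : ℝ :=
  ((p - q) * A / ((γ - q) * F)) ^ (1 / (γ - p))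

/-- The reduced function `h(t) = A t^(p-q) - F t^(γ-q)`; the critical points of `φ_λ` in `(0,∞)` are
the solutions of `h(t) = λ B`. -/
noncomputable def hfun (p q γ A F : ℝ) : ℝ → ℝ :=
  fun t => A * t ^ (p - q) - F * t ^ (γ - q)

theorem crit_eq {p q γ A B F lam t : ℝ} (hq : 1 < q) (hqp : q < p) (hpγ : p < γ) (ht : 0 < t)
    (h : deriv (phi p q γ A B F lam) t = 0) : hfun p q γ A F t = lam * B := by
  have hd : HasDerivAt (phi p q γ A B F lam)
      (A / p * (p * t ^ (p - 1)) - lam * B / q * (q * t ^ (q - 1))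
        - F / γ * (γ * t ^ (γ - 1))) t :=
    (((Real.hasDerivAt_rpow_const (Or.inl ht.ne')).const_mul _).sub
      ((Real.hasDerivAt_rpow_const (Or.inl ht.ne')).const_mul _)).sub
      ((Real.hasDerivAt_rpow_const (Or.inl ht.ne')).const_mul _)
  rw [hd.deriv] at h
  have hp0 : p ≠ 0 := by linarith
  have hq0 : q ≠ 0 := by linarith
  have hg0 : γ ≠ 0 := by linarith
  have e1 : t ^ (p - 1) = t ^ (q - 1) * t ^ (p - q) := by
    rw [← Real.rpow_add ht]; ring_nf
  have e2 : t ^ (γ - 1) = t ^ (q - 1) * t ^ (γ - q) := by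
    rw [← Real.rpow_add ht]; ring_nf
  have hpos : 0 < t ^ (q - 1) := Real.rpow_pos_of_pos ht _
  have hfac : t ^ (q - 1) * (hfun p q γ A F t - lam * B) = 0 := by
    rw [← h, e1, e2, hfun]
    field_simp
    ring
  have := (mul_eq_zero.mp hfac).resolve_left hpos.ne'
  linarith

theorem Tcrit_pos {p q γ A F : ℝ} (hqp : q < p) (hpγ : p < γ) (hA : 0 < A) (hF : 0 < F) :
    0 < Tcrit p q γ A F :=
  Real.rpow_pos_of_pos
    (div_pos (mul_pos (by linarith) hA) (mul_pos (by linarith) hF)) _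

theorem Tcrit_rpow {p q γ A F : ℝ} (hqp : q < p) (hpγ : p < γ) (hA : 0 < A) (hF : 0 < F) :
    Tcrit p q γ A F ^ (γ - p) = (p - q) * A / ((γ - q) * F) := by
  have hx : 0 < (p - q) * A / ((γ - q) * F) :=
    div_pos (mul_pos (by linarith) hA) (mul_pos (by linarith) hF)
  have : γ - p ≠ 0 := by linarith
  rw [Tcrit, ← Real.rpow_mul hx.le, one_div_mul_cancel this, Real.rpow_one]

theorem hfun_Tcrit {p q γ A B F : ℝ} (hqp : q < p) (hpγ : p < γ) (hA : 0 < A) (hB : 0 < B)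
    (hF : 0 < F) : hfun p q γ A F (Tcrit p q γ A F) = Lam p q γ A B F * B := by
  have hT := Tcrit_pos hqp hpγ hA hF
  have h1 : 0 < p - q := by linarith
  have h2 : 0 < γ - q := by linarith
  have h3 : 0 < γ - p := by linarith
  have e : Tcrit p q γ A F ^ (γ - q)
      = Tcrit p q γ A F ^ (p - q) * ((p - q) * A / ((γ - q) * F)) := by
    rw [← Tcrit_rpow hqp hpγ hA hF, ← Real.rpow_add hT]; ring_nf
  have e2 : Tcrit p q γ A F ^ (p - q)
      = ((p - q) / (γ - q)) ^ ((p - q) / (γ - p)) * A ^ ((p - q) / (γ - p))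
        / F ^ ((p - q) / (γ - p)) := by
    rw [Tcrit, ← Real.rpow_mul (by positivity), ← Real.mul_rpow (by positivity) hA.le,
      ← Real.div_rpow (by positivity) hF.le]
    congr 1
    · field_simp
    · field_simp
  have e3 : A ^ ((γ - q) / (γ - p)) = A ^ ((p - q) / (γ - p)) * A := by
    rw [← Real.rpow_add_one hA.ne']
    congr 1
    field_simp
    ring
  have hFp : 0 < F ^ ((p - q) / (γ - p)) := Real.rpow_pos_of_pos hF _
  rw [hfun, e, e2, Lam, e3]
  field_simp
  ring

theorem Lam_pos {p q γ A B F : ℝ} (hqp : q < p) (hpγ : p < γ) (hA : 0 < A) (hB : 0 < B)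
    (hF : 0 < F) : 0 < Lam p q γ A B F := by
  have h1 : 0 < p - q := by linarith
  have h2 : 0 < γ - q := by linarith
  have h3 : 0 < γ - p := by linarith
  unfold Lam
  positivity

theorem continuous_hfun {p q γ A F : ℝ} (hqp : q < p) (hpγ : p < γ) :
    Continuous (hfun p q γ A F) :=
  (continuous_const.mul (Real.continuous_rpow_const (by linarith))).sub
    (continuous_const.mul (Real.continuous_rpow_const (by linarith)))

/-- The factored form of the derivative of `h` makes its sign visible: it changes exactly where
`t^(γ-p) = T^(γ-p)`. -/
theorem deriv_hfun {p q γ A F t : ℝ} (ht : 0 < t) :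
    deriv (hfun p q γ A F) t
      = t ^ (p - q - 1) * ((p - q) * A - (γ - q) * F * t ^ (γ - p)) := by
  have hd : HasDerivAt (hfun p q γ A F)
      (A * ((p - q) * t ^ (p - q - 1)) - F * ((γ - q) * t ^ (γ - q - 1))) t :=
    ((Real.hasDerivAt_rpow_const (Or.inl ht.ne')).const_mul _).sub
      ((Real.hasDerivAt_rpow_const (Or.inl ht.ne')).const_mul _)
  have e : t ^ (γ - q - 1) = t ^ (p - q - 1) * t ^ (γ - p) := by
    rw [← Real.rpow_add ht]; ring_nf
  rw [hd.deriv, e]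
  ring

theorem hfun_strictMonoOn {p q γ A F : ℝ} (hqp : q < p) (hpγ : p < γ) (hA : 0 < A) (hF : 0 < F) :
    StrictMonoOn (hfun p q γ A F) (Icc 0 (Tcrit p q γ A F)) := by
  refine strictMonoOn_of_deriv_pos (convex_Icc _ _) (continuous_hfun hqp hpγ).continuousOn ?_
  intro t ht
  rw [interior_Icc] at ht
  rw [deriv_hfun ht.1]
  refine mul_pos (Real.rpow_pos_of_pos ht.1 _) ?_
  have h := Real.rpow_lt_rpow ht.1.le ht.2 (sub_pos.mpr hpγ)
  rw [Tcrit_rpow hqp hpγ hA hF, lt_div_iff₀ (mul_pos (by linarith) hF)] at h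
  linarith

theorem hfun_strictAntiOn {p q γ A F : ℝ} (hqp : q < p) (hpγ : p < γ) (hA : 0 < A) (hF : 0 < F) :
    StrictAntiOn (hfun p q γ A F) (Ici (Tcrit p q γ A F)) := by
  have hT := Tcrit_pos hqp hpγ hA hF
  refine strictAntiOn_of_deriv_neg (convex_Ici _) (continuous_hfun hqp hpγ).continuousOn ?_
  intro t ht
  rw [interior_Ici] at ht
  have ht' : Tcrit p q γ A F < t := ht
  have ht0 : 0 < t := hT.trans ht'
  rw [deriv_hfun ht0]
  refine mul_neg_of_pos_of_neg (Real.rpow_pos_of_pos ht0 _) ?_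
  have h := Real.rpow_lt_rpow hT.le ht' (sub_pos.mpr hpγ)
  rw [Tcrit_rpow hqp hpγ hA hF, div_lt_iff₀ (mul_pos (by linarith) hF)] at h
  linarith

/-- Any selection `λ ↦ t(λ)` of positive critical points converges to `T(A,F)`; nothing about which
branch it follows, nor any continuity, is needed. -/
theorem tendsto_crit {p q γ A B F : ℝ} (hq : 1 < q) (hqp : q < p) (hpγ : p < γ)
    (hA : 0 < A) (hB : 0 < B) (hF : 0 < F) (t : ℝ → ℝ)
    (ht : ∀ lam : ℝ, 0 < lam → lam < Lam p q γ A B F →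
      0 < t lam ∧ deriv (phi p q γ A B F lam) (t lam) = 0) :
    Tendsto t (𝓝[<] (Lam p q γ A B F)) (𝓝 (Tcrit p q γ A F)) := by
  have hT := Tcrit_pos hqp hpγ hA hF
  have hL := Lam_pos hqp hpγ hA hB hF
  have hmax := hfun_Tcrit hqp hpγ hA hB hF
  have key : ∀ s, s < Lam p q γ A B F * B → ∀ᶠ lam in 𝓝[<] (Lam p q γ A B F),
      0 < t lam ∧ s < hfun p q γ A F (t lam) := by
    intro s hs
    have hs' : s / B < Lam p q γ A B F := by rwa [div_lt_iff₀ hB]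
    filter_upwards [self_mem_nhdsWithin, nhdsWithin_le_nhds (lt_mem_nhds hL),
      nhdsWithin_le_nhds (lt_mem_nhds hs')] with lam h1 h2 h3
    obtain ⟨h4, h5⟩ := ht lam h2 h1
    refine ⟨h4, ?_⟩
    rw [crit_eq hq hqp hpγ h4 h5]
    exact (div_lt_iff₀ hB).mp h3
  rw [tendsto_order]
  constructor
  · intro c hc
    rcases lt_or_ge c 0 with hc0 | hc0
    · filter_upwards [key _ (sub_one_lt _)] with lam h
      exact hc0.trans h.1
    · have hlt := hfun_strictMonoOn hqp hpγ hA hF ⟨hc0, hc.le⟩ ⟨hT.le, le_rfl⟩ hc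
      rw [hmax] at hlt
      filter_upwards [key _ hlt] with lam h
      by_contra! hle
      exact absurd h.2 (not_lt.mpr ((hfun_strictMonoOn hqp hpγ hA hF).monotoneOn
        ⟨h.1.le, hle.trans hc.le⟩ ⟨hc0, hc.le⟩ hle))
  · intro c hc
    have hlt := hfun_strictAntiOn hqp hpγ hA hF self_mem_Ici (mem_Ici.mpr hc.le) hc
    rw [hmax] at hlt
    filter_upwards [key _ hlt] with lam h
    by_contra! hle
    exact absurd h.2 (not_lt.mpr ((hfun_strictAntiOn hqp hpγ hA hF).antitoneOn
      (mem_Ici.mpr hc.le) (mem_Ici.mpr (hc.le.trans hle)) hle))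

theorem tendsto_energy {p q γ A B F T L : ℝ} (hT : 0 < T) {t : ℝ → ℝ}
    (h : Tendsto t (𝓝[<] L) (𝓝 T)) :
    Tendsto (fun lam => phi p q γ A B F lam (t lam)) (𝓝[<] L) (𝓝 (phi p q γ A B F L T)) := by
  have hid : Tendsto (fun lam : ℝ => lam) (𝓝[<] L) (𝓝 L) := nhdsWithin_le_nhds
  exact (((h.rpow_const (Or.inl hT.ne')).const_mul _).sub
    (((hid.mul_const B).div_const q).mul (h.rpow_const (Or.inl hT.ne')))).sub
    ((h.rpow_const (Or.inl hT.ne')).const_mul _)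

/-- as `λ ↑ Λ(A,B,F)` both branches of critical points converge to the
inflection point `T(A,F)`, and both reduced energies converge to `φ_Λ(T(A,F))`. -/
theorem branches_converge_to_inflection (p q γ A B F : ℝ)
    (hq : 1 < q) (hqp : q < p) (hpγ : p < γ)
    (hA : 0 < A) (hB : 0 < B) (hF : 0 < F)
    (tplus tminus : ℝ → ℝ)
    (hbr : ∀ lam : ℝ, 0 < lam → lam < Lam p q γ A B F →
      0 < tplus lam ∧ tplus lam < tminus lam ∧
      deriv (phi p q γ A B F lam) (tplus lam) = 0 ∧
      deriv (phi p q γ A B F lam) (tminus lam) = 0 ∧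
      ∀ t : ℝ, 0 < t → deriv (phi p q γ A B F lam) t = 0 →
        t = tplus lam ∨ t = tminus lam) :
    Filter.Tendsto tminus (𝓝[<] (Lam p q γ A B F)) (𝓝 (Tcrit p q γ A F)) ∧
    Filter.Tendsto tplus (𝓝[<] (Lam p q γ A B F)) (𝓝 (Tcrit p q γ A F)) ∧
    Filter.Tendsto (fun lam => phi p q γ A B F lam (tminus lam))
      (𝓝[<] (Lam p q γ A B F))
      (𝓝 (phi p q γ A B F (Lam p q γ A B F) (Tcrit p q γ A F))) ∧
    Filter.Tendsto (fun lam => phi p q γ A B F lam (tplus lam))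
      (𝓝[<] (Lam p q γ A B F))
      (𝓝 (phi p q γ A B F (Lam p q γ A B F) (Tcrit p q γ A F))) := by
  have hT := Tcrit_pos hqp hpγ hA hF
  have hm := tendsto_crit hq hqp hpγ hA hB hF tminus fun lam h1 h2 =>
    let ⟨a, b, _, d, _⟩ := hbr lam h1 h2
    ⟨a.trans b, d⟩
  have hp := tendsto_crit hq hqp hpγ hA hB hF tplus fun lam h1 h2 =>
    let ⟨a, _, c, _, _⟩ := hbr lam h1 h2
    ⟨a, c⟩
  exact ⟨hm, hp, tendsto_energy hT hm, tendsto_energy hT hp⟩
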